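/- arXiv:0706.0089 — 2 statements merged into one kernel-verified Lean document; each statement's English description precedes it below -/
import Mathlib

section
/- Let n ≥ 2. The homomorphism p : S̃_n → S_n is surjective, the element z is central in S̃_n and has order exactly 2, and the kernel of p is exactly the two-element central subgroup {1, z}. Consequently S̃_n is a central extension of the symmetric group S_n by Z/2Z. -/
open Equiv

/-- Generator `z` as an element of the free group. -/
def zF (n : ℕ) : FreeGroup (Fin (n-1) ⊕ Unit) := FreeGroup.of (Sum.inr ())

/-- Generator `τ̃ᵢ` as an element of the free group. -/
def tF (n : ℕ) (i : Fin (n-1)) : FreeGroup (Fin (n-1) ⊕ Unit) := FreeGroup.of (Sum.inl i)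

/-- Relations of the spin extension of the symmetric group. -/
def spinRels (n : ℕ) : Set (FreeGroup (Fin (n-1) ⊕ Unit)) :=
  {zF n * zF n} ∪
  {w | ∃ i : Fin (n-1), w = zF n * tF n i * (tF n i * zF n)⁻¹} ∪
  {w | ∃ i : Fin (n-1), w = tF n i * tF n i * (zF n)⁻¹} ∪
  {w | ∃ i j : Fin (n-1), 1 < |(i : ℤ) - (j : ℤ)| ∧ w = tF n i * tF n j * (zF n * tF n j * tF n i)⁻¹} ∪
  {w | ∃ i j : Fin (n-1), (j : ℕ) = (i : ℕ) + 1 ∧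
        w = tF n i * tF n j * tF n i * (tF n j * tF n i * tF n j)⁻¹}

/-- The spin extension `S̃ₙ` of the symmetric group, as a presented group. -/
abbrev SpinSym (n : ℕ) := PresentedGroup (spinRels n)

/-- The central element `z` of `S̃ₙ`. -/
def zt (n : ℕ) : SpinSym n := PresentedGroup.of (Sum.inr ())

/-- The generator `τ̃ᵢ` of `S̃ₙ`. -/
def tt (n : ℕ) (i : Fin (n-1)) : SpinSym n := PresentedGroup.of (Sum.inl i)

/-- `i` as an element of `Fin n`. -/
def finL (n : ℕ) (i : Fin (n-1)) : Fin n := ⟨i, by have := i.2; omega⟩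

/-- `i+1` as an element of `Fin n`. -/
def finR (n : ℕ) (i : Fin (n-1)) : Fin n := ⟨(i : ℕ) + 1, by have := i.2; omega⟩

/-- `τ̃ₖ` for a natural number index, `1` out of range. -/
def ttN (n : ℕ) (k : ℕ) : SpinSym n := if h : k < n - 1 then tt n ⟨k, h⟩ else 1

/-- For `i ≤ j`, the word `τ̃ᵢ·τ̃ᵢ₊₁⋯τ̃ⱼ₋₂·τ̃ⱼ₋₁·τ̃ⱼ₋₂⋯τ̃ᵢ₊₁·τ̃ᵢ` (equal to `1` when `i = j`). -/
def ttilCore (n i j : ℕ) : SpinSym n :=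
  (((List.range' i (j - i)) ++ (List.range' i (j - 1 - i)).reverse).map (ttN n)).prod

/-- The lifted transpositions `τ̃_{i,j}`, with `τ̃_{j,i} = z·τ̃_{i,j}` for `i < j`,
and `τ̃_{k,k} = 1`. -/
def ttil (n i j : ℕ) : SpinSym n := if j < i then zt n * ttilCore n j i else ttilCore n i j

/-!
Two facts carry the proof.

* `z ≠ 1`: the Clifford algebra of a quadratic form equal to `-1` on the simple roots of type `A`
  is a model of the relations. Simple roots square to `-1`, orthogonal ones anticommute, and
  `aba = ⟨a, b⟩ a - Q(a) b` is symmetric in two adjacent roots; so `τ̃ᵢ` may act as the `i`-th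
  simple root and `z` as `-1`.
* `ker p ⊆ ⟨z⟩`: modulo `z` the `τ̃ᵢ` become Coxeter generators `s₀, …, sₙ₋₂`. With
  `H = ⟨s₀, …, sₖ₋₁⟩` and `c_j = s_j ⋯ s_k`, the relations say that `⟨s₀, …, s_k⟩` permutes the
  cosets `c_j H` as it permutes the points `j ≤ k + 1`. An element that acts trivially therefore
  fixes the coset `c_{k+1} H = H`, so it lies in `H`; descending in `k`, it is trivial.
-/

section Coxeter

/-- The product `s j * s (j + 1) * ⋯ * s (m - 1)`, equal to `1` if `m ≤ j`. For `j ≤ m` it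
represents the coset of `⟨s 0, …, s (m - 2)⟩` that corresponds to the point `j`. -/
def intervalProd {M : Type*} [Monoid M] (s : ℕ → M) (j m : ℕ) : M :=
  ((List.Ico j m).map s).prod

section IntervalProd

variable {M : Type*} [Monoid M] {s : ℕ → M} {j l m : ℕ}

theorem intervalProd_self (s : ℕ → M) (j : ℕ) : intervalProd s j j = 1 := by
  simp only [intervalProd, List.Ico.self_empty, List.map_nil, List.prod_nil]

theorem intervalProd_eq_mul (s : ℕ → M) (h : j < m) :
    intervalProd s j m = s j * intervalProd s (j + 1) m := by
  simp only [intervalProd, List.Ico.eq_cons h, List.map_cons, List.prod_cons]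

theorem intervalProd_mul_intervalProd (s : ℕ → M) (hjl : j ≤ l) (hlm : l ≤ m) :
    intervalProd s j l * intervalProd s l m = intervalProd s j m := by
  simp only [intervalProd, ← List.Ico.append_consecutive hjl hlm, List.map_append,
    List.prod_append]

theorem commute_intervalProd {x : M} (h : ∀ i, j ≤ i → i < m → Commute x (s i)) :
    Commute x (intervalProd s j m) := by
  refine Commute.list_prod_right _ _ fun y hy => ?_
  obtain ⟨i, hi, rfl⟩ := List.mem_map.1 hy
  exact h i (List.Ico.mem.1 hi).1 (List.Ico.mem.1 hi).2

end IntervalProd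

variable {G : Type*} [Group G] {s : ℕ → G} {n : ℕ}

/-- The elements `s 0, …, s (n - 1)` satisfy the Coxeter relations of type `Aₙ`. Indexing by `ℕ`
instead of `Fin n` lets the same family serve for every smaller rank. -/
structure IsTypeACoxeter (s : ℕ → G) (n : ℕ) : Prop where
  mul_self : ∀ i < n, s i * s i = 1
  commute : ∀ i j, i + 1 < j → j < n → Commute (s i) (s j)
  braid : ∀ i, i + 1 < n → s i * s (i + 1) * s i = s (i + 1) * s i * s (i + 1)

namespace IsTypeACoxeter

theorem mono {m : ℕ} (hs : IsTypeACoxeter s n) (hmn : m ≤ n) : IsTypeACoxeter s m where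
  mul_self i hi := hs.mul_self i (hi.trans_le hmn)
  commute i j hij hj := hs.commute i j hij (hj.trans_le hmn)
  braid i hi := hs.braid i (hi.trans_le hmn)

theorem mul_intervalProd_of_lt (hs : IsTypeACoxeter s n) {i j : ℕ} (hij : i + 1 < j) :
    s i * intervalProd s j n = intervalProd s j n * s i :=
  commute_intervalProd fun l hjl hln => hs.commute i l (by omega) hln

theorem mul_intervalProd_self (hs : IsTypeACoxeter s n) {i : ℕ} (hi : i < n) :
    s i * intervalProd s i n = intervalProd s (i + 1) n := by
  rw [intervalProd_eq_mul s hi, ← mul_assoc, hs.mul_self i hi, one_mul]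

theorem mul_intervalProd_of_ge (hs : IsTypeACoxeter s n) {i j : ℕ} (hji : j ≤ i)
    (hi : i + 1 < n) : s (i + 1) * intervalProd s j n = intervalProd s j n * s i := by
  have hleft : s (i + 1) * intervalProd s j i = intervalProd s j i * s (i + 1) :=
    commute_intervalProd fun l _ hli => (hs.commute l (i + 1) (by omega) hi).symm
  have hright : s i * intervalProd s (i + 2) n = intervalProd s (i + 2) n * s i :=
    hs.mul_intervalProd_of_lt (by omega)
  have hsplit : intervalProd s j n =
      intervalProd s j i * (s i * s (i + 1) * intervalProd s (i + 2) n) := by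
    rw [mul_assoc, ← intervalProd_eq_mul s hi, ← intervalProd_eq_mul s (by omega : i < n),
      intervalProd_mul_intervalProd s hji (by omega)]
  calc s (i + 1) * intervalProd s j n
      = intervalProd s j i * (s (i + 1) * s i * s (i + 1)) * intervalProd s (i + 2) n := by
        rw [hsplit, ← mul_assoc, hleft]; simp only [mul_assoc]
    _ = intervalProd s j i * (s i * s (i + 1)) * (s i * intervalProd s (i + 2) n) := by
        rw [← hs.braid i hi]; simp only [mul_assoc]
    _ = intervalProd s j n * s i := by
        rw [hright, hsplit]; simp only [mul_assoc]

theorem mk_mul_intervalProd {k i j : ℕ} (hs : IsTypeACoxeter s (k + 1)) (hi : i ≤ k)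
    (hj : j ≤ k + 1) :
    ((s i * intervalProd s j (k + 1) : G) : G ⧸ Subgroup.closure (s '' Set.Iio k)) =
      (intervalProd s (swap i (i + 1) j) (k + 1) : G) := by
  have absorb {l : ℕ} (hl : l < k) (x : G) :
      ((x * s l : G) : G ⧸ Subgroup.closure (s '' Set.Iio k)) = x :=
    QuotientGroup.mk_mul_of_mem x (Subgroup.subset_closure ⟨l, hl, rfl⟩)
  rcases lt_trichotomy i j with hij | rfl | hji
  · rcases (show i + 1 ≤ j from hij).eq_or_lt with rfl | hij'
    · rw [swap_apply_right, ← intervalProd_eq_mul s (by omega)]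
    · rw [swap_apply_of_ne_of_ne hij.ne' hij'.ne', hs.mul_intervalProd_of_lt hij',
        absorb (by omega)]
  · rw [swap_apply_left, hs.mul_intervalProd_self (by omega)]
  · obtain ⟨l, rfl⟩ : ∃ l, i = l + 1 := ⟨i - 1, by omega⟩
    rw [swap_apply_of_ne_of_ne (by omega) (by omega), hs.mul_intervalProd_of_ge (by omega)
      (by omega), absorb (by omega)]

variable {p : G →* Perm ℕ}

theorem coset_eq_intervalProd_map_apply {k : ℕ} (hs : IsTypeACoxeter s (k + 1))
    (hp : ∀ i ≤ k, p (s i) = swap i (i + 1)) {g : G}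
    (hg : g ∈ Subgroup.closure (s '' Set.Iio (k + 1))) :
    p g (k + 1) ≤ k + 1 ∧
      (g : G ⧸ Subgroup.closure (s '' Set.Iio k)) =
        (intervalProd s (p g (k + 1)) (k + 1) : G) := by
  have step {i : ℕ} (hi : i < k + 1) {x : G} (hx : p x (k + 1) ≤ k + 1 ∧
      (x : G ⧸ Subgroup.closure (s '' Set.Iio k)) =
        (intervalProd s (p x (k + 1)) (k + 1) : G)) :
      p (s i * x) (k + 1) ≤ k + 1 ∧
        ((s i * x : G) : G ⧸ Subgroup.closure (s '' Set.Iio k)) =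
          (intervalProd s (p (s i * x) (k + 1)) (k + 1) : G) := by
    obtain ⟨hle, hcoset⟩ := hx
    have hik : i ≤ k := by omega
    rw [map_mul, Perm.mul_apply, hp i hik, ← hs.mk_mul_intervalProd hik hle]
    refine ⟨?_, ?_⟩
    · rw [swap_apply_def]
      split_ifs <;> omega
    · exact congrArg (s i • ·) hcoset
  induction hg using Subgroup.closure_induction_left with
  | one => simp only [map_one, Perm.one_apply, le_refl, intervalProd_self, and_self]
  | mul_left _ hy x _ ih =>
    obtain ⟨i, hi, rfl⟩ := hy
    exact step hi ih
  | inv_mul_cancel _ hy x _ ih =>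
    obtain ⟨i, hi, rfl⟩ := hy
    rw [inv_eq_of_mul_eq_one_left (hs.mul_self i hi)]
    exact step hi ih

theorem eq_one_of_map_eq_one (hs : IsTypeACoxeter s n)
    (hp : ∀ i < n, p (s i) = swap i (i + 1)) {g : G}
    (hg : g ∈ Subgroup.closure (s '' Set.Iio n)) (hpg : p g = 1) : g = 1 := by
  induction n with
  | zero => simpa using hg
  | succ k ih =>
    have hcoset := (hs.coset_eq_intervalProd_map_apply (fun i hi => hp i (by omega)) hg).2
    rw [hpg, Perm.one_apply, intervalProd_self] at hcoset
    have hmem : g ∈ Subgroup.closure (s '' Set.Iio k) := by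
      simpa only [inv_one, one_mul] using QuotientGroup.eq.1 hcoset.symm
    exact ih (hs.mono k.le_succ) (fun i hi => hp i (by omega)) hmem

end IsTypeACoxeter

theorem viaEmbedding_swap {α β : Type*} [DecidableEq α] [DecidableEq β] (ι : α ↪ β) (a b : α) :
    (swap a b).viaEmbedding ι = swap (ι a) (ι b) := by
  ext x
  by_cases hx : x ∈ Set.range ι
  · obtain ⟨y, rfl⟩ := hx
    rw [Perm.viaEmbedding_apply, ι.injective.map_swap]
  · have hne (c : α) : x ≠ ι c := fun h => hx ⟨c, h.symm⟩
    rw [Perm.viaEmbedding_apply_of_notMem _ _ _ hx, swap_apply_of_ne_of_ne (hne a) (hne b)]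

end Coxeter

section Relations

variable (n : ℕ)

theorem zt_mul_self : zt n * zt n = 1 :=
  PresentedGroup.one_of_mem (rels := spinRels n) (x := zF n * zF n)
    (.inl (.inl (.inl (.inl rfl))))

theorem zt_mul_tt (i : Fin (n - 1)) : zt n * tt n i = tt n i * zt n :=
  PresentedGroup.mk_eq_mk_of_mul_inv_mem (rels := spinRels n)
    (x := zF n * tF n i) (y := tF n i * zF n) (.inl (.inl (.inl (.inr ⟨i, rfl⟩))))

theorem tt_mul_self (i : Fin (n - 1)) : tt n i * tt n i = zt n :=
  PresentedGroup.mk_eq_mk_of_mul_inv_mem (rels := spinRels n)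
    (x := tF n i * tF n i) (y := zF n) (.inl (.inl (.inr ⟨i, rfl⟩)))

variable {n}

theorem tt_mul_tt {i j : Fin (n - 1)} (hij : 1 < |(i : ℤ) - (j : ℤ)|) :
    tt n i * tt n j = zt n * tt n j * tt n i :=
  PresentedGroup.mk_eq_mk_of_mul_inv_mem (rels := spinRels n)
    (x := tF n i * tF n j) (y := zF n * tF n j * tF n i) (.inl (.inr ⟨i, j, hij, rfl⟩))

theorem tt_braid {i j : Fin (n - 1)} (hij : (j : ℕ) = (i : ℕ) + 1) :
    tt n i * tt n j * tt n i = tt n j * tt n i * tt n j :=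
  PresentedGroup.mk_eq_mk_of_mul_inv_mem (rels := spinRels n)
    (x := tF n i * tF n j * tF n i) (y := tF n j * tF n i * tF n j) (.inr ⟨i, j, hij, rfl⟩)

theorem mem_of_tt_mem_of_zt_mem {H : Subgroup (SpinSym n)} (ht : ∀ i, tt n i ∈ H)
    (hz : zt n ∈ H) (g : SpinSym n) : g ∈ H :=
  PresentedGroup.generated_by _ H (Sum.rec ht fun _ => hz) g

variable (n) in
theorem zt_mem_center : zt n ∈ Subgroup.center (SpinSym n) :=
  Subgroup.mem_center_iff.2 fun g => Subgroup.mem_centralizer_singleton_iff.1 <|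
    mem_of_tt_mem_of_zt_mem
      (fun i => Subgroup.mem_centralizer_singleton_iff.2 (zt_mul_tt n i).symm)
      (Subgroup.mem_centralizer_singleton_iff.2 rfl) g

theorem lift_eq_one_of_mem_spinRels {G : Type*} [Group G] {t : Fin (n - 1) → G} {z : G}
    (hz : z * z = 1) (hsq : ∀ i, t i * t i = z)
    (hanti : ∀ i j : Fin (n - 1), 1 < |(i : ℤ) - (j : ℤ)| → t i * t j = z * t j * t i)
    (hbraid : ∀ i j : Fin (n - 1), (j : ℕ) = (i : ℕ) + 1 → t i * t j * t i = t j * t i * t j) :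
    ∀ r ∈ spinRels n, FreeGroup.lift (Sum.elim t fun _ => z) r = 1 := by
  rintro r ((((rfl | ⟨i, rfl⟩) | ⟨i, rfl⟩) | ⟨i, j, hij, rfl⟩) | ⟨i, j, hij, rfl⟩) <;>
    simp only [zF, tF, map_mul, map_inv, mul_inv_eq_one, FreeGroup.lift_apply_of, Sum.elim_inl,
      Sum.elim_inr]
  · exact hz
  · rw [← hsq i, mul_assoc]
  · exact hsq i
  · exact hanti i j hij
  · exact hbraid i j hij

end Relations

section Clifford

open CliffordAlgebra QuadraticMap

section Representation

variable {R M : Type*} [CommRing R] [AddCommGroup M] [Module R M] {Q : QuadraticForm R M}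

theorem ι_mul_self_eq_neg_one {a : M} (ha : Q a = -1) : ι Q a * ι Q a = -1 := by
  rw [ι_sq_scalar, ha, map_neg, map_one]

theorem ι_braid {a b : M} (hab : Q a = Q b) (hpolar : polar Q a b = -Q a) :
    ι Q a * ι Q b * ι Q a = ι Q b * ι Q a * ι Q b := by
  rw [ι_mul_ι_mul_ι, ι_mul_ι_mul_ι, polar_comm Q b a, hpolar, ← hab, sub_eq_neg_add,
    sub_eq_add_neg, neg_smul, neg_smul]

theorem cliffordAlgebra_neg_one_ne_one [Nontrivial R] [Invertible (2 : R)] :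
    (-1 : CliffordAlgebra Q) ≠ 1 := by
  have htwo : IsUnit (2 : CliffordAlgebra Q) := by
    simpa only [map_ofNat] using (isUnit_of_invertible (2 : R)).map (algebraMap R _)
  rw [Ne, neg_eq_iff_add_eq_zero, one_add_one_eq_two]
  exact htwo.ne_zero

/-- A vector with `Q a = -1`, as a unit of the Clifford algebra. -/
def ιUnit (a : M) (ha : Q a = -1) : (CliffordAlgebra Q)ˣ where
  val := ι Q a
  inv := -ι Q a
  val_inv := by rw [mul_neg, ι_mul_self_eq_neg_one ha, neg_neg]
  inv_val := by rw [neg_mul, ι_mul_self_eq_neg_one ha, neg_neg]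

/-- The representation of `S̃ₙ` in a Clifford algebra, in which `τ̃ᵢ` acts as the vector `v i` and
`z` as `-1`. The vectors `v i` are to be the simple roots of type `A`, normalised by
`Q (v i) = -1`. -/
noncomputable def cliffordRep {n : ℕ} (v : Fin (n - 1) → M) (hv : ∀ i, Q (v i) = -1)
    (hortho : ∀ i j : Fin (n - 1), 1 < |(i : ℤ) - (j : ℤ)| → Q.IsOrtho (v i) (v j))
    (hpolar : ∀ i j : Fin (n - 1), (j : ℕ) = (i : ℕ) + 1 → polar Q (v i) (v j) = 1) :
    SpinSym n →* (CliffordAlgebra Q)ˣ :=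
  PresentedGroup.toGroup <| lift_eq_one_of_mem_spinRels (t := fun i => ιUnit (v i) (hv i))
    (z := -1) (by rw [neg_mul_neg, one_mul])
    (fun i => Units.ext (ι_mul_self_eq_neg_one (hv i)))
    (fun i j hij => Units.ext <| by
      rw [neg_one_mul, neg_mul]
      exact ι_mul_ι_comm_of_isOrtho (hortho i j hij))
    (fun i j hij => Units.ext <|
      ι_braid ((hv i).trans (hv j).symm) (by rw [hpolar i j hij, hv i, neg_neg]))

end Representation

section Root

theorem toQuadraticMap_toBilin'_single_one {R κ : Type*} [CommRing R] [Fintype κ] [DecidableEq κ]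
    (A : Matrix κ κ R) (i : κ) :
    LinearMap.BilinMap.toQuadraticMap (Matrix.toBilin' A) (Pi.single i 1) = A i i := by
  rw [LinearMap.BilinMap.toQuadraticMap_apply, Matrix.toBilin'_single]

theorem polar_toQuadraticMap_toBilin'_single_one {R κ : Type*} [CommRing R] [Fintype κ]
    [DecidableEq κ] (A : Matrix κ κ R) (i j : κ) :
    polar (LinearMap.BilinMap.toQuadraticMap (Matrix.toBilin' A)) (Pi.single i 1) (Pi.single j 1) =
      A i j + A j i := by
  rw [LinearMap.BilinMap.polar_toQuadraticMap, Matrix.toBilin'_single, Matrix.toBilin'_single]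

/-- The invariant form of the root system `Aₙ` in the basis of simple roots, scaled by `-1/2`:
simple roots have value `-1`. -/
noncomputable def typeAForm (n : ℕ) : QuadraticForm ℚ (Fin n → ℚ) :=
  LinearMap.BilinMap.toQuadraticMap
    (Matrix.toBilin' ((-1 / 2 : ℚ) • (CartanMatrix.A n).map (Int.cast : ℤ → ℚ)))

variable {n : ℕ}

theorem typeAForm_single_one (i : Fin n) : typeAForm n (Pi.single i 1) = -1 := by
  rw [typeAForm, toQuadraticMap_toBilin'_single_one]
  simp [CartanMatrix.A]

theorem polar_typeAForm_single_one (i j : Fin n) :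
    polar (typeAForm n) (Pi.single i 1) (Pi.single j 1) = -(CartanMatrix.A n i j : ℚ) := by
  rw [typeAForm, polar_toQuadraticMap_toBilin'_single_one]
  simp only [Matrix.smul_apply, Matrix.map_apply, smul_eq_mul, (CartanMatrix.A_isSymm n).apply i j]
  ring

theorem typeAForm_isOrtho {i j : Fin n} (hij : 1 < |(i : ℤ) - (j : ℤ)|) :
    (typeAForm n).IsOrtho (Pi.single i 1) (Pi.single j 1) := by
  have hA : CartanMatrix.A n i j = 0 := by
    simp only [CartanMatrix.A, Matrix.of_apply]
    grind
  rw [← isOrtho_polarBilin, polarBilin_apply_apply, polar_typeAForm_single_one, hA, Int.cast_zero,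
    neg_zero]

theorem polar_typeAForm_of_adjacent {i j : Fin n} (hij : (j : ℕ) = (i : ℕ) + 1) :
    polar (typeAForm n) (Pi.single i 1) (Pi.single j 1) = 1 := by
  have hA : CartanMatrix.A n i j = -1 := by
    simp only [CartanMatrix.A, Matrix.of_apply]
    grind
  rw [polar_typeAForm_single_one, hA, Int.cast_neg, Int.cast_one, neg_neg]

end Root

theorem zt_ne_one (n : ℕ) : zt n ≠ 1 := by
  intro h
  let φ := cliffordRep (fun i => Pi.single i 1) (typeAForm_single_one (n := n - 1))
    (fun _ _ => typeAForm_isOrtho) (fun _ _ => polar_typeAForm_of_adjacent)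
  have hφz : φ (zt n) = -1 := PresentedGroup.toGroup.of (x := Sum.inr ()) _
  have hone : (-1 : (CliffordAlgebra (typeAForm (n - 1)))ˣ) = 1 := by rw [← hφz, h, map_one]
  exact cliffordAlgebra_neg_one_ne_one (congrArg Units.val hone)

end Clifford

section Kernel

theorem orderOf_zt (n : ℕ) : orderOf (zt n) = 2 :=
  orderOf_eq_prime (by rw [pow_two, zt_mul_self]) (zt_ne_one n)

theorem mem_zpowers_iff_of_orderOf_eq_two {G : Type*} [Group G] {a g : G} (ha : orderOf a = 2) :
    g ∈ Subgroup.zpowers a ↔ g = 1 ∨ g = a := by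
  classical
  have hfin : IsOfFinOrder a := orderOf_pos_iff.1 (by omega)
  rw [hfin.mem_zpowers_iff_mem_range_orderOf, ha]
  simp [Finset.range_add_one, or_comm]

theorem normal_of_le_center {G : Type*} [Group G] {H : Subgroup G} (hH : H ≤ Subgroup.center G) :
    H.Normal :=
  ⟨fun x hx g => by rwa [Subgroup.mem_center_iff.1 (hH hx) g, mul_inv_cancel_right]⟩

instance normal_zpowers_zt (n : ℕ) : (Subgroup.zpowers (zt n)).Normal :=
  normal_of_le_center (Subgroup.zpowers_le.2 (zt_mem_center n))

theorem mk_zt (n : ℕ) : (zt n : SpinSym n ⧸ Subgroup.zpowers (zt n)) = 1 :=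
  (QuotientGroup.eq_one_iff _).2 (Subgroup.mem_zpowers _)

variable {n : ℕ}

theorem ttN_of_lt {k : ℕ} (hk : k < n - 1) : ttN n k = tt n ⟨k, hk⟩ :=
  dif_pos hk

theorem isTypeACoxeter_mk_ttN (n : ℕ) :
    IsTypeACoxeter (fun k => (ttN n k : SpinSym n ⧸ Subgroup.zpowers (zt n))) (n - 1) where
  mul_self i hi := by
    rw [ttN_of_lt hi, ← QuotientGroup.mk_mul, tt_mul_self, mk_zt]
  commute i j hij hj := by
    have hfar : 1 < |(i : ℤ) - (j : ℤ)| := by rw [lt_abs]; omega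
    rw [ttN_of_lt hj, ttN_of_lt (by omega : i < n - 1), Commute, SemiconjBy,
      ← QuotientGroup.mk_mul, tt_mul_tt hfar, QuotientGroup.mk_mul, QuotientGroup.mk_mul, mk_zt,
      one_mul]
  braid i hi := by
    rw [ttN_of_lt hi, ttN_of_lt (by omega : i < n - 1)]
    exact congrArg QuotientGroup.mk (tt_braid rfl)

theorem mk_mem_closure_mk_ttN (g : SpinSym n) :
    (g : SpinSym n ⧸ Subgroup.zpowers (zt n)) ∈ Subgroup.closure
      ((fun k => (ttN n k : SpinSym n ⧸ Subgroup.zpowers (zt n))) '' Set.Iio (n - 1)) := by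
  refine mem_of_tt_mem_of_zt_mem
    (H := (Subgroup.closure _).comap (QuotientGroup.mk' (Subgroup.zpowers (zt n))))
    (fun i => ?_) ?_ g
  · exact Subgroup.subset_closure ⟨i, i.2, congrArg QuotientGroup.mk (ttN_of_lt i.2)⟩
  · rw [Subgroup.mem_comap, QuotientGroup.mk'_apply, mk_zt]
    exact one_mem _

variable {p : SpinSym n →* Perm (Fin n)}

theorem surjective_of_map_tt
    (hpt : ∀ i : Fin (n - 1), p (tt n i) = swap (finL n i) (finR n i)) :
    Function.Surjective p := by
  cases n with
  | zero => exact Function.surjective_to_subsingleton p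
  | succ m =>
    rw [← MonoidHom.mrange_eq_top, ← top_le_iff, ← Perm.mclosure_swap_castSucc_succ,
      Submonoid.closure_le]
    rintro _ ⟨i, rfl⟩
    exact ⟨tt (m + 1) i, hpt i⟩

theorem ker_eq_zpowers_zt
    (hpt : ∀ i : Fin (n - 1), p (tt n i) = swap (finL n i) (finR n i))
    (hpz : p (zt n) = 1) : p.ker = Subgroup.zpowers (zt n) := by
  have hle : Subgroup.zpowers (zt n) ≤ p.ker := Subgroup.zpowers_le.2 hpz
  let q : SpinSym n ⧸ Subgroup.zpowers (zt n) →* Perm ℕ :=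
    (Perm.viaEmbeddingHom Fin.valEmbedding).comp (QuotientGroup.lift _ p hle)
  have hq : ∀ i < n - 1, q (ttN n i) = swap i (i + 1) := by
    intro i hi
    have hpi : p (ttN n i) = swap (finL n ⟨i, hi⟩) (finR n ⟨i, hi⟩) := by
      rw [ttN_of_lt hi, hpt]
    exact (congrArg (Perm.viaEmbeddingHom Fin.valEmbedding) hpi).trans
      (viaEmbedding_swap Fin.valEmbedding _ _)
  refine le_antisymm (fun g hg => (QuotientGroup.eq_one_iff g).1 ?_) hle
  have hqg : q g = 1 :=
    (congrArg (Perm.viaEmbeddingHom Fin.valEmbedding) hg).trans (map_one _)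
  exact (isTypeACoxeter_mk_ttN n).eq_one_of_map_eq_one hq (mk_mem_closure_mk_ttN g) hqg

end Kernel

theorem spin_extension_basic (n : ℕ) (hn : 2 ≤ n)
    (p : SpinSym n →* Equiv.Perm (Fin n))
    (hpt : ∀ i : Fin (n-1), p (tt n i) = Equiv.swap (finL n i) (finR n i))
    (hpz : p (zt n) = 1) :
    Function.Surjective p ∧
    zt n ∈ Subgroup.center (SpinSym n) ∧
    orderOf (zt n) = 2 ∧
    (∀ g : SpinSym n, p g = 1 ↔ g = 1 ∨ g = zt n) ∧
    Nonempty (MonoidHom.ker p ≃* Multiplicative (ZMod 2)) := by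
  have hker : p.ker = Subgroup.zpowers (zt n) := ker_eq_zpowers_zt hpt hpz
  refine ⟨surjective_of_map_tt hpt, zt_mem_center n, orderOf_zt n, fun g => ?_, ?_⟩
  · rw [← mem_zpowers_iff_of_orderOf_eq_two (orderOf_zt n), ← hker, MonoidHom.mem_ker]
  · have hcard : Nat.card p.ker = 2 := by rw [hker, Nat.card_zpowers, orderOf_zt]
    have : Fact (Nat.Prime 2) := ⟨Nat.prime_two⟩
    exact ⟨mulEquivOfPrimeCardEq hcard (Nat.card_zmod 2)⟩
end

section
/- For n ≥ 4, the subgroup of S̃_n generated by τ̃_0 and τ̃_2 is isomorphic to the quaternion group Q₈ of order 8; more precisely there is an injective group homomorphism Φ from Q₈ into S̃_n with Φ(i) = τ̃_0, Φ(j) = τ̃_2, Φ(k) = τ̃_0·τ̃_2 and Φ(−1) = z, whose image is the subgroup generated by τ̃_0 and τ̃_2. -/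
open Equiv

/-!
The relations give `τ̃ᵢ² = z = τ̃ⱼ²`, `z² = 1` and `τ̃ᵢτ̃ⱼ = z τ̃ⱼτ̃ᵢ = τ̃ⱼτ̃ᵢ⁻¹` for non-adjacent
`τ̃ᵢ` and `τ̃ⱼ`, so there is a homomorphism `Q₈ → S̃ₙ` sending the quaternion units `i`, `j` to
`τ̃ᵢ`, `τ̃ⱼ`. Every nontrivial element of `Q₈` is `-1` or squares to `-1`, so this homomorphism is
injective as soon as `z ≠ 1`. That is seen in the basic spin representation: the simple roots
`eᵢ - eᵢ₊₁`, scaled to norm `-1` in a Clifford algebra, satisfy the relations of the `τ̃ᵢ` with `z`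
acting as `-1 ≠ 1`.
-/

section QuaternionGroup

variable {G : Type*} [Group G] {n : ℕ} {x y : G}

theorem zpow_cast_intCast {m : ℕ} (hx : x ^ m = 1) (k : ℤ) :
    x ^ ((k : ZMod m).cast : ℤ) = x ^ k := by
  rw [ZMod.coe_intCast, Int.emod_def, zpow_sub, zpow_mul, zpow_natCast, hx, one_zpow, inv_one,
    mul_one]

theorem zpow_mul_eq_mul_zpow_neg (hxy : x * y = y * x⁻¹) (k : ℤ) :
    x ^ k * y = y * x ^ (-k) := by
  have h : SemiconjBy y x⁻¹ x := hxy.symm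
  simpa using (h.zpow_right k).symm

/-- The universal property of the generalized quaternion group: elements `x`, `y` satisfying its
defining relations determine a homomorphism with `a 1 ↦ x` and `xa 0 ↦ y`. Exponents in
`ZMod (2 * n)` are read through their integer representatives, so that `n = 0` is covered. -/
def quaternionLift (hx : x ^ (2 * n) = 1) (hy : y ^ 2 = x ^ n) (hxy : x * y = y * x⁻¹) :
    QuaternionGroup n →* G :=
  MonoidHom.mk'
    (fun
      | .a i => x ^ (i.cast : ℤ)
      | .xa i => y * x ^ (i.cast : ℤ))
    (by
      rintro (i | i) (j | j) <;>
        obtain ⟨k, rfl⟩ := ZMod.intCast_surjective i <;>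
        obtain ⟨l, rfl⟩ := ZMod.intCast_surjective j
      · simp only [QuaternionGroup.a_mul_a, ← Int.cast_add, zpow_cast_intCast hx, zpow_add]
      · simp only [QuaternionGroup.a_mul_xa, ← Int.cast_sub, zpow_cast_intCast hx]
        rw [← mul_assoc, zpow_mul_eq_mul_zpow_neg hxy, mul_assoc, ← zpow_add, neg_add_eq_sub]
      · simp only [QuaternionGroup.xa_mul_a, ← Int.cast_add, zpow_cast_intCast hx, zpow_add,
          mul_assoc]
      · simp only [QuaternionGroup.xa_mul_xa, ← Int.cast_natCast (R := ZMod (2 * n)) n,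
          ← Int.cast_sub, ← Int.cast_add, zpow_cast_intCast hx]
        calc x ^ ((n : ℤ) + l - k) = x ^ n * (x ^ (-k) * x ^ l) := by
              rw [← zpow_natCast, ← zpow_add, ← zpow_add]
              congr 1
              ring
          _ = y * (y * x ^ (-k)) * x ^ l := by rw [← hy, sq]; simp only [mul_assoc]
          _ = y * x ^ k * (y * x ^ l) := by
              rw [← zpow_mul_eq_mul_zpow_neg hxy]; simp only [mul_assoc])

section quaternionLift

variable (hx : x ^ (2 * n) = 1) (hy : y ^ 2 = x ^ n) (hxy : x * y = y * x⁻¹)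

theorem quaternionLift_a_one : quaternionLift hx hy hxy (.a 1) = x := by
  simpa using! zpow_cast_intCast hx 1

theorem quaternionLift_xa_zero : quaternionLift hx hy hxy (.xa 0) = y := by
  change y * x ^ ((0 : ZMod (2 * n)).cast : ℤ) = y
  simp

theorem range_quaternionLift :
    (quaternionLift hx hy hxy).range = Subgroup.closure {x, y} := by
  apply le_antisymm
  · have hx_mem : x ∈ Subgroup.closure {x, y} := Subgroup.subset_closure (by simp)
    have hy_mem : y ∈ Subgroup.closure {x, y} := Subgroup.subset_closure (by simp)
    rintro _ ⟨i | i, rfl⟩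
    · exact zpow_mem hx_mem _
    · exact mul_mem hy_mem (zpow_mem hx_mem _)
  · rw [Subgroup.closure_le, Set.pair_subset_iff]
    exact ⟨⟨_, quaternionLift_a_one hx hy hxy⟩, ⟨_, quaternionLift_xa_zero hx hy hxy⟩⟩

end quaternionLift

theorem quaternionGroup_two_injective_of_map_ne_one {M : Type*} [Monoid M]
    (f : QuaternionGroup 2 →* M) (hf : f (.a 1 ^ 2) ≠ 1) : Function.Injective f := by
  have eq_one_or_eq_or_sq_eq :
      ∀ g : QuaternionGroup 2, g = 1 ∨ g = .a 1 ^ 2 ∨ g ^ 2 = .a 1 ^ 2 := by decide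
  rw [injective_iff_map_eq_one]
  intro g hg
  rcases eq_one_or_eq_or_sq_eq g with h | h | h
  · exact h
  · exact absurd (h ▸ hg) hf
  · exact absurd (by rw [← h, map_pow, hg, one_pow]) hf

end QuaternionGroup

section CliffordAlgebra

open CliffordAlgebra QuadraticMap

variable {R M : Type*} [CommRing R] [AddCommGroup M] [Module R M] {Q : QuadraticForm R M} {v w : M}

theorem ι_braid_s2 (hv : polar Q v w = -Q v) (hw : polar Q v w = -Q w) :
    ι Q v * ι Q w * ι Q v = ι Q w * ι Q v * ι Q w := by
  rw [ι_mul_ι_mul_ι, ι_mul_ι_mul_ι, polar_comm Q w v, sub_eq_add_neg, sub_eq_add_neg, ← neg_smul,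
    ← neg_smul, ← hv, ← hw, add_comm]

/-- The Clifford generator of a vector of norm `-1`, as a unit. -/
def cliffordUnit (hv : Q v = -1) : (CliffordAlgebra Q)ˣ where
  val := ι Q v
  inv := -ι Q v
  val_inv := by simp [hv]
  inv_val := by simp [hv]

theorem cliffordUnit_mul_self (hv : Q v = -1) : cliffordUnit hv * cliffordUnit hv = -1 :=
  Units.ext (by simp [cliffordUnit, hv])

end CliffordAlgebra

namespace SpinSym

variable {n : ℕ}

section Relations

theorem tt_mul_self (i : Fin (n - 1)) : tt n i * tt n i = zt n :=
  PresentedGroup.mk_eq_mk_of_mul_inv_mem (x := tF n i * tF n i) (y := zF n)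
    (.inl (.inl (.inr ⟨i, rfl⟩)))

theorem zt_mul_self : zt n * zt n = 1 :=
  PresentedGroup.one_of_mem (x := zF n * zF n) (.inl (.inl (.inl (.inl rfl))))

theorem tt_mul_tt {i j : Fin (n - 1)} (hij : 1 < |(i : ℤ) - (j : ℤ)|) :
    tt n i * tt n j = zt n * tt n j * tt n i :=
  PresentedGroup.mk_eq_mk_of_mul_inv_mem (x := tF n i * tF n j) (y := zF n * tF n j * tF n i)
    (.inl (.inr ⟨i, j, hij, rfl⟩))

theorem zt_mul_tt (i : Fin (n - 1)) : zt n * tt n i = tt n i * zt n := by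
  rw [← tt_mul_self i, mul_assoc]

theorem inv_tt (i : Fin (n - 1)) : (tt n i)⁻¹ = zt n * tt n i :=
  inv_eq_of_mul_eq_one_left (by rw [mul_assoc, tt_mul_self, zt_mul_self])

theorem tt_mul_tt_eq_mul_inv {i j : Fin (n - 1)} (hij : 1 < |(i : ℤ) - (j : ℤ)|) :
    tt n i * tt n j = tt n j * (tt n i)⁻¹ := by
  rw [tt_mul_tt hij, zt_mul_tt, inv_tt, mul_assoc]

end Relations

section lift

variable {G : Type*} [Group G] {t : Fin (n - 1) → G} {z : G}
  (hz : z * z = 1) (ht : ∀ i, t i * t i = z)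
  (hanti : ∀ i j : Fin (n - 1), 1 < |(i : ℤ) - (j : ℤ)| → t i * t j = z * t j * t i)
  (hbraid : ∀ i j : Fin (n - 1), (j : ℕ) = i + 1 → t i * t j * t i = t j * t i * t j)

/-- The universal property of `S̃ₙ`: elements `t i` and `z` satisfying its defining relations
determine a homomorphism with `tt n i ↦ t i` and `zt n ↦ z`. -/
def lift : SpinSym n →* G :=
  PresentedGroup.toGroup (f := Sum.elim t fun _ => z) (by
    rintro r ((((rfl | ⟨i, rfl⟩) | ⟨i, rfl⟩) | ⟨i, j, hij, rfl⟩) | ⟨i, j, hij, rfl⟩) <;>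
      simp only [zF, tF, map_mul, map_inv, FreeGroup.lift_apply_of, Sum.elim_inl, Sum.elim_inr,
        mul_inv_eq_one]
    · exact hz
    · rw [← ht i, mul_assoc]
    · exact ht i
    · exact hanti i j hij
    · exact hbraid i j hij)

theorem lift_zt : lift hz ht hanti hbraid (zt n) = z :=
  PresentedGroup.toGroup.of _

end lift

section spinRep

open CliffordAlgebra QuadraticMap

/-- The simple root `eᵢ - eᵢ₊₁` of the root system of type `Aₙ₋₁`. -/
def simpleRoot (i : Fin (n - 1)) : Fin n → ℚ :=
  Pi.single (finL n i) 1 - Pi.single (finR n i) 1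

theorem simpleRoot_dotProduct_self (i : Fin (n - 1)) : simpleRoot i ⬝ᵥ simpleRoot i = 2 := by
  simp [simpleRoot, finL, finR, one_add_one_eq_two]

theorem simpleRoot_dotProduct_eq_zero {i j : Fin (n - 1)} (hij : 1 < |(i : ℤ) - (j : ℤ)|) :
    simpleRoot i ⬝ᵥ simpleRoot j = 0 := by
  rw [lt_abs] at hij
  have h₁ : (i : ℕ) ≠ j := by omega
  have h₂ : (i : ℕ) ≠ j + 1 := by omega
  have h₃ : (i : ℕ) + 1 ≠ j := by omega
  simp [simpleRoot, finL, finR, h₁, h₂, h₃]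

theorem simpleRoot_dotProduct_succ {i j : Fin (n - 1)} (hij : (j : ℕ) = i + 1) :
    simpleRoot i ⬝ᵥ simpleRoot j = -1 := by
  have hi : (i : ℕ) ≠ i + 1 + 1 := by omega
  simp [simpleRoot, finL, finR, hij, hi]

/-- The quadratic form `-⟨v, v⟩ / 2` on `ℚⁿ`, scaled so that the simple roots have norm `-1`. -/
def spinForm (n : ℕ) : QuadraticForm ℚ (Fin n → ℚ) :=
  (-1 / 2 : ℚ) • LinearMap.BilinMap.toQuadraticMap (dotProductBilin ℚ ℚ)

theorem spinForm_apply (v : Fin n → ℚ) : spinForm n v = -1 / 2 * (v ⬝ᵥ v) :=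
  rfl

theorem polar_spinForm (v w : Fin n → ℚ) : polar (spinForm n) v w = -(v ⬝ᵥ w) := by
  simp only [polar, spinForm_apply, add_dotProduct, dotProduct_add, dotProduct_comm w v]
  ring

theorem spinForm_simpleRoot (i : Fin (n - 1)) : spinForm n (simpleRoot i) = -1 := by
  rw [spinForm_apply, simpleRoot_dotProduct_self]
  norm_num

theorem ι_simpleRoot_anticomm {i j : Fin (n - 1)} (hij : 1 < |(i : ℤ) - (j : ℤ)|) :
    ι (spinForm n) (simpleRoot i) * ι (spinForm n) (simpleRoot j) =
      -(ι (spinForm n) (simpleRoot j) * ι (spinForm n) (simpleRoot i)) := by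
  apply ι_mul_ι_comm_of_isOrtho
  rw [← isOrtho_polarBilin, polarBilin_apply_apply, polar_spinForm,
    simpleRoot_dotProduct_eq_zero hij, neg_zero]

theorem ι_simpleRoot_braid {i j : Fin (n - 1)} (hij : (j : ℕ) = i + 1) :
    ι (spinForm n) (simpleRoot i) * ι (spinForm n) (simpleRoot j) * ι (spinForm n) (simpleRoot i) =
      ι (spinForm n) (simpleRoot j) * ι (spinForm n) (simpleRoot i) *
        ι (spinForm n) (simpleRoot j) := by
  apply ι_braid_s2 <;> rw [polar_spinForm, simpleRoot_dotProduct_succ hij, spinForm_simpleRoot]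

/-- The basic spin representation of `S̃ₙ`, with values in the units of the Clifford algebra of
`spinForm n`: `τ̃ᵢ` acts as the simple root `eᵢ - eᵢ₊₁` and `z` as `-1`. -/
def spinRep (n : ℕ) : SpinSym n →* (CliffordAlgebra (spinForm n))ˣ :=
  lift (t := fun i => cliffordUnit (spinForm_simpleRoot i)) (z := -1) (by simp)
    (fun i => cliffordUnit_mul_self (spinForm_simpleRoot i))
    (fun _ _ hij => Units.ext <| by simpa using! ι_simpleRoot_anticomm hij)
    (fun _ _ hij => Units.ext <| ι_simpleRoot_braid hij)

theorem spinRep_zt : spinRep n (zt n) = -1 :=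
  lift_zt ..

theorem zt_ne_one : zt n ≠ 1 := by
  intro h
  have : CharZero (CliffordAlgebra (spinForm n)) := algebraRat.charZero _
  have h_neg : (1 : (CliffordAlgebra (spinForm n))ˣ) = -1 := by
    rw [← spinRep_zt, h, map_one]
  have h_two : (2 : CliffordAlgebra (spinForm n)) = 0 := by
    rw [← one_add_one_eq_two, ← eq_neg_iff_add_eq_zero]
    exact congrArg Units.val h_neg
  exact two_ne_zero h_two

end spinRep

end SpinSym

theorem quaternion_subgroup_general {n : ℕ} {i j : Fin (n - 1)}
    (hij : 1 < |(i : ℤ) - (j : ℤ)|) :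
    ∃ Φ : QuaternionGroup 2 →* SpinSym n,
      Function.Injective Φ ∧
      Φ (QuaternionGroup.a 1) = tt n i ∧
      Φ (QuaternionGroup.xa 0) = tt n j ∧
      Φ (QuaternionGroup.a 1 * QuaternionGroup.xa 0) = tt n i * tt n j ∧
      Φ (QuaternionGroup.a 1 ^ 2) = zt n ∧
      Φ.range = Subgroup.closure ({tt n i, tt n j} : Set (SpinSym n)) := by
  have h_sq (k : Fin (n - 1)) : tt n k ^ 2 = zt n := by rw [sq, SpinSym.tt_mul_self]
  have hx : tt n i ^ (2 * 2) = 1 := by rw [pow_mul, h_sq, sq, SpinSym.zt_mul_self]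
  have hy : tt n j ^ 2 = tt n i ^ 2 := by rw [h_sq, h_sq]
  have hxy := SpinSym.tt_mul_tt_eq_mul_inv hij
  let Φ := quaternionLift hx hy hxy
  have h_i : Φ (.a 1) = tt n i := quaternionLift_a_one hx hy hxy
  have h_j : Φ (.xa 0) = tt n j := quaternionLift_xa_zero hx hy hxy
  have h_neg_one : Φ (.a 1 ^ 2) = zt n := by rw [map_pow, h_i, h_sq]
  have h_inj : Function.Injective Φ :=
    quaternionGroup_two_injective_of_map_ne_one Φ (h_neg_one.trans_ne SpinSym.zt_ne_one)
  exact ⟨Φ, h_inj, h_i, h_j, by rw [map_mul, h_i, h_j], h_neg_one, range_quaternionLift hx hy hxy⟩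

theorem quaternion_subgroup (n : ℕ) (hn : 4 ≤ n) :
    ∃ Φ : QuaternionGroup 2 →* SpinSym n,
      Function.Injective Φ ∧
      Φ (QuaternionGroup.a 1) = tt n ⟨0, by omega⟩ ∧
      Φ (QuaternionGroup.xa 0) = tt n ⟨2, by omega⟩ ∧
      Φ (QuaternionGroup.a 1 * QuaternionGroup.xa 0) = tt n ⟨0, by omega⟩ * tt n ⟨2, by omega⟩ ∧
      Φ (QuaternionGroup.a 1 ^ 2) = zt n ∧
      Φ.range = Subgroup.closure ({tt n ⟨0, by omega⟩, tt n ⟨2, by omega⟩} : Set (SpinSym n)) :=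
  quaternion_subgroup_general (by norm_num)
end
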